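/- Let p be a strictly positive joint probability mass function of the discrete random vector (X_v)_{v∈V}, and let A_1,…,A_r and C be pairwise disjoint subsets of V, with C_j ⊆ C for each j = 1,…,r. If p_{A_1∪⋯∪A_r|C} = ∏_{j=1}^r p_{A_j|C} (mutual conditional independence of A_1,…,A_r given C) and p_{A_j|C} = p_{A_j|C_j} for each j, then, writing A = A_1∪⋯∪A_r and C* = C_1∪⋯∪C_r, one has p_{A|C} = ∏_{j=1}^r p_{A_j|C_j} = p_{A|C*}; in particular A ⊥ (C∖C*) | C*. -/

import Mathlib

open scoped Classical BigOperators

/-- A mixed graph on a node set `V`: a set of directed edges and a symmetric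
irreflexive set of undirected edges, the two edge sets being disjoint. -/
structure MixedGraph (V : Type*) where
  dir : V → V → Prop
  undir : V → V → Prop
  undir_symm : ∀ {a b}, undir a b → undir b a
  undir_irrefl : ∀ a, ¬ undir a a
  edge_disjoint : ∀ a b, dir a b → ¬ undir a b

namespace MixedGraph

variable {V : Type*} [Fintype V] [DecidableEq V] (G : MixedGraph V)

/-- One step of a semi-directed path: an undirected edge or a directed edge
followed in the direction of traversal. -/
def step (a b : V) : Prop := G.dir a b ∨ G.undir a b

/-- No semi-directed cycle: there is no directed edge `a → b` together with a
semi-directed path from `b` back to `a`. -/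
def NoSemiDirectedCycle : Prop :=
  ∀ a b : V, G.dir a b → ¬ Relation.ReflTransGen G.step b a

/-- Two nodes are in the same chain component iff they are joined by a path of
undirected edges (the equivalence relation generated by the undirected part). -/
def sameComp (a b : V) : Prop := Relation.ReflTransGen G.undir a b

/-- The chain component of a node. -/
noncomputable def component (v : V) : Finset V :=
  Finset.univ.filter fun w => G.sameComp v w

/-- `T` is a chain component of `G`. -/
def IsComponent (T : Finset V) : Prop := ∃ v, T = G.component v

/-- The collection of chain components of `G`. -/
noncomputable def componentsF : Finset (Finset V) :=
  Finset.univ.image fun v => G.component v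

/-- The parents `pa_G(A)`: nodes outside `A` with a directed edge into `A`. -/
noncomputable def paG (A : Finset V) : Finset V :=
  Finset.univ.filter fun w => w ∉ A ∧ ∃ v ∈ A, G.dir w v

/-- The (inclusive) neighbours `Nb_G(A)`: `A` together with all nodes joined to
`A` by an undirected edge. -/
noncomputable def nbG (A : Finset V) : Finset V :=
  A ∪ Finset.univ.filter fun w => ∃ v ∈ A, G.undir v w

/-- The edge relation of the directed graph `D` of chain components:
`T₁ → T₂` iff they are distinct chain components and `G` has a directed edge
from a node of `T₁` to a node of `T₂`. -/
def dirD (T₁ T₂ : Finset V) : Prop :=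
  G.IsComponent T₁ ∧ G.IsComponent T₂ ∧ T₁ ≠ T₂ ∧ ∃ v ∈ T₁, ∃ w ∈ T₂, G.dir v w

/-- `pa_D(T)`: the union of the parent components of `T` in `D`. -/
noncomputable def paD (T : Finset V) : Finset V :=
  Finset.univ.filter fun w => G.dirD (G.component w) T

/-- `nd_D(T)`: the union of the components `T'` such that there is no directed
path from `T` to `T'` in `D`. -/
noncomputable def ndD (T : Finset V) : Finset V :=
  Finset.univ.filter fun w => ¬ Relation.ReflTransGen G.dirD T (G.component w)

/-- A set of nodes `A` is connected if the subgraph of the undirected part of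
`G` induced by `A` is connected (in particular nonempty). -/
def ConnectedIn (A : Finset V) : Prop :=
  A.Nonempty ∧ ∀ a ∈ A, ∀ b ∈ A,
    Relation.ReflTransGen (fun x y => x ∈ A ∧ y ∈ A ∧ G.undir x y) a b

/-- The connected component of `v` inside the induced subgraph on `A`. -/
noncomputable def compIn (A : Finset V) (v : V) : Finset V :=
  A.filter fun w =>
    Relation.ReflTransGen (fun x y => x ∈ A ∧ y ∈ A ∧ G.undir x y) v w

/-- The set of connected components of the induced subgraph on `A`. -/
noncomputable def connComps (A : Finset V) : Finset (Finset V) :=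
  A.image fun v => G.compIn A v

/-- `ord` is a strict total order of the chain components consistent with `G`:
`ord T T'` implies that `T` is not a parent component of `T'`. -/
def ConsistentOrder (ord : Finset V → Finset V → Prop) : Prop :=
  (∀ T₁ T₂, G.IsComponent T₁ → G.IsComponent T₂ → T₁ ≠ T₂ →
      ord T₁ T₂ ∨ ord T₂ T₁) ∧
  (∀ T, G.IsComponent T → ¬ ord T T) ∧
  (∀ T₁ T₂ T₃, G.IsComponent T₁ → G.IsComponent T₂ → G.IsComponent T₃ →
      ord T₁ T₂ → ord T₂ T₃ → ord T₁ T₃) ∧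
  (∀ T₁ T₂, G.IsComponent T₁ → G.IsComponent T₂ → ord T₁ T₂ → ¬ G.dirD T₁ T₂)

/-- `pre(T)`: the union of all the chain components `T'` with `T ≺ T'`
(the predecessors, i.e. the past, of `T`). -/
noncomputable def pre (ord : Finset V → Finset V → Prop) (T : Finset V) :
    Finset V :=
  Finset.univ.filter fun w => ord T (G.component w)

end MixedGraph

/-- A cell of the joint contingency table: variable `v` takes one of the
levels `0, …, r v - 1` (level `0` playing the role of the first level `1`). -/
abbrev Cell {V : Type*} (r : V → ℕ) := ∀ v : V, Fin (r v)

variable {V : Type*} [Fintype V] [DecidableEq V] {r : V → ℕ}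

/-- The marginal probability `p_S(i_S)` (as a function of a full cell `i`,
depending on it only through the coordinates in `S`). -/
noncomputable def marginal (p : Cell r → ℝ) (S : Finset V) (i : Cell r) : ℝ :=
  ∑ j : Cell r, if ∀ v ∈ S, j v = i v then p j else 0

/-- The conditional probability `p_{A|B}(i_A | i_B)`. -/
noncomputable def condProb (p : Cell r → ℝ) (A B : Finset V) (i : Cell r) : ℝ :=
  marginal p (A ∪ B) i / marginal p B i

/-- `p` is a strictly positive joint probability mass function. -/
def IsPosPMF (p : Cell r → ℝ) : Prop :=
  (∀ i, 0 < p i) ∧ ∑ i : Cell r, p i = 1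

/-- Conditional independence `A ⊥ B | C`. -/
def CondIndep (p : Cell r → ℝ) (A B C : Finset V) : Prop :=
  ∀ i : Cell r,
    marginal p (A ∪ B ∪ C) i * marginal p C i =
      marginal p (A ∪ C) i * marginal p (B ∪ C) i

/-- The cell agreeing with `i` on `S` and equal to the first (reference)
level outside `S`. -/
def splice (hr : ∀ v, 2 ≤ r v) (S : Finset V) (i : Cell r) : Cell r :=
  fun v => if v ∈ S then i v else ⟨0, by have := hr v; omega⟩

/-- The conditional multivariate logistic contrast
`η^{(A)}(i_A | i_B) = Σ_{s ⊆ A} (−1)^{|A∖s|} log p_{A|B}((i_s, 1_{A∖s}) | i_B)`. -/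
noncomputable def mlContrast (hr : ∀ v, 2 ≤ r v) (p : Cell r → ℝ)
    (A B : Finset V) (i : Cell r) : ℝ :=
  ∑ s ∈ A.powerset,
    (-1 : ℝ) ^ (A \ s).card * Real.log (condProb p A B (splice hr (s ∪ B) i))

/-- The multivariate regression (MR) Markov property for the chain graph `G`
with respect to the consistent ordering `ord`: for every chain component `T`
and every nonempty `A ⊆ T`, (MR1) if `A` is connected then
`A ⊥ (pre(T)∖pa_G(A)) | pa_G(A)`, and (MR2) if `A` is disconnected then its
connected components are mutually independent given `pre(T)`. -/
def MRMarkov (G : MixedGraph V) (ord : Finset V → Finset V → Prop)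
    (p : Cell r → ℝ) : Prop :=
  ∀ T : Finset V, G.IsComponent T → ∀ A ⊆ T, A.Nonempty →
    (G.ConnectedIn A →
      CondIndep p A (G.pre ord T \ G.paG A) (G.paG A)) ∧
    (¬ G.ConnectedIn A →
      ∀ i : Cell r,
        condProb p A (G.pre ord T) i =
          ∏ Aj ∈ G.connComps A, condProb p Aj (G.pre ord T) i)

/-- The block-recursive Markov property of type IV for the chain graph `G`:
(IV0) `T ⊥ (nd_D(T)∖pa_D(T)) | pa_D(T)`;
(IV1) `A ⊥ (pa_D(T)∖pa_G(A)) | pa_G(A)` for all `A ⊆ T`;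
(IV2) `A ⊥ (T∖Nb_G(A)) | pa_D(T)` for all connected `A ⊆ T`. -/
def TypeIVMarkov (G : MixedGraph V) (p : Cell r → ℝ) : Prop :=
  (∀ T : Finset V, G.IsComponent T →
      CondIndep p T (G.ndD T \ G.paD T) (G.paD T)) ∧
  (∀ T : Finset V, G.IsComponent T → ∀ A ⊆ T,
      CondIndep p A (G.paD T \ G.paG A) (G.paG A)) ∧
  (∀ T : Finset V, G.IsComponent T → ∀ A ⊆ T, G.ConnectedIn A →
      CondIndep p A (T \ G.nbG A) (G.paD T))

/-
Let `M_S` be the operator sending a function on cells to its `S`-marginal. Then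
`M_S M_T = N • M_{S ∩ T}`, where `N` is the number of configurations of the variables outside
`S ∪ T`. Apply `M_{A ∪ C*}` to both sides of `p_{A ∪ C} = p_{A|C} p_C`. Since `A ∩ C ⊆ C* ⊆ C`,
the sets `A ∪ C` and `C` meet `A ∪ C*` in `A ∪ C*` and `C*` and have the same union with it, so the
same `N` appears on both sides and cancels. If `p_{A|C}` depends only on the coordinates in
`A ∪ C*`, as the product `∏ p_{A_j|C_j}` does, it can be pulled out of the sum, which leaves
`p_{A ∪ C*} = p_{A|C} p_{C*}`.
-/

theorem marginal_congr (p : Cell r → ℝ) {S : Finset V} {i j : Cell r}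
    (h : ∀ v ∈ S, i v = j v) : marginal p S i = marginal p S j := by
  refine Finset.sum_congr rfl fun k _ => ?_
  have hk : (∀ v ∈ S, k v = i v) ↔ ∀ v ∈ S, k v = j v :=
    forall₂_congr fun v hv => by rw [h v hv]
  simp only [hk]

theorem marginal_pos {p : Cell r → ℝ} (hp : ∀ i, 0 < p i) (S : Finset V) (i : Cell r) :
    0 < marginal p S i := by
  refine Finset.sum_pos' (fun j _ => ?_) ⟨i, Finset.mem_univ i, by simpa using hp i⟩
  split_ifs
  exacts [(hp j).le, le_rfl]

theorem marginal_mul_of_congr (f : Cell r → ℝ) {g : Cell r → ℝ} {S : Finset V} {i : Cell r}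
    (hg : ∀ j, (∀ v ∈ S, j v = i v) → g j = g i) :
    marginal (fun j => g j * f j) S i = g i * marginal f S i := by
  rw [marginal, marginal, Finset.mul_sum]
  refine Finset.sum_congr rfl fun j _ => ?_
  split_ifs with hj
  · rw [hg j hj]
  · rw [mul_zero]

theorem marginal_one (S : Finset V) (i : Cell r) :
    marginal (fun _ => 1) S i = ∏ v ∈ Sᶜ, (r v : ℝ) := by
  have hcells : (Finset.univ.filter fun j : Cell r => ∀ v ∈ S, j v = i v) =
      Fintype.piFinset fun v => if v ∈ S then {i v} else Finset.univ := by
    ext j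
    simp only [Finset.mem_filter_univ, Fintype.mem_piFinset]
    refine forall_congr' fun v => ?_
    by_cases hv : v ∈ S <;> simp [hv]
  rw [marginal, Finset.sum_boole, hcells, Fintype.card_piFinset, Nat.cast_prod,
    ← Finset.prod_compl_mul_prod S]
  have hS : ∏ v ∈ S, ((if v ∈ S then {i v} else Finset.univ : Finset (Fin (r v))).card : ℝ) = 1 :=
    Finset.prod_eq_one fun v hv => by simp [hv]
  rw [hS, mul_one]
  exact Finset.prod_congr rfl fun v hv => by simp [Finset.mem_compl.mp hv]

theorem sum_agree_and_agree (S T : Finset V) (i k : Cell r) :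
    (∑ j : Cell r, if (∀ v ∈ S, j v = i v) ∧ (∀ v ∈ T, k v = j v) then (1 : ℝ) else 0) =
      if ∀ v ∈ S ∩ T, k v = i v then ∏ v ∈ (S ∪ T)ᶜ, (r v : ℝ) else 0 := by
  split_ifs with hk
  · rw [← marginal_one (S ∪ T) (S.piecewise i k)]
    refine Finset.sum_congr rfl fun j _ => if_congr ?_ rfl rfl
    refine ⟨fun ⟨hS, hT⟩ v hv => ?_, fun h => ⟨fun v hv => ?_, fun v hv => ?_⟩⟩
    · by_cases hvS : v ∈ S
      · simpa [hvS] using hS v hvS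
      · simpa [hvS] using (hT v ((Finset.mem_union.mp hv).resolve_left hvS)).symm
    · simpa [hv] using h v (Finset.mem_union_left T hv)
    · have hj := h v (Finset.mem_union_right S hv)
      by_cases hvS : v ∈ S
      · rw [hj, Finset.piecewise_eq_of_mem _ _ _ hvS, hk v (Finset.mem_inter.mpr ⟨hvS, hv⟩)]
      · rw [hj, Finset.piecewise_eq_of_notMem _ _ _ hvS]
  · refine Finset.sum_eq_zero fun j _ => if_neg fun ⟨hS, hT⟩ => hk fun v hv => ?_
    rw [hT v (Finset.mem_of_mem_inter_right hv), hS v (Finset.mem_of_mem_inter_left hv)]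

theorem marginal_marginal (p : Cell r → ℝ) (S T : Finset V) (i : Cell r) :
    marginal (marginal p T) S i = (∏ v ∈ (S ∪ T)ᶜ, (r v : ℝ)) * marginal p (S ∩ T) i := by
  calc marginal (marginal p T) S i
      = ∑ j : Cell r, ∑ k : Cell r,
          p k * if (∀ v ∈ S, j v = i v) ∧ (∀ v ∈ T, k v = j v) then 1 else 0 := by
        refine Finset.sum_congr rfl fun j _ => ?_
        by_cases hj : ∀ v ∈ S, j v = i v
        · simp only [if_pos hj, marginal, and_iff_right hj, mul_ite, mul_one, mul_zero]
        · simp only [hj, false_and, if_false, mul_zero, Finset.sum_const_zero]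
    _ = ∑ k : Cell r,
          p k * if ∀ v ∈ S ∩ T, k v = i v then ∏ v ∈ (S ∪ T)ᶜ, (r v : ℝ) else 0 := by
        rw [Finset.sum_comm]
        simp only [← Finset.mul_sum, sum_agree_and_agree]
    _ = (∏ v ∈ (S ∪ T)ᶜ, (r v : ℝ)) * marginal p (S ∩ T) i := by
        rw [marginal, Finset.mul_sum]
        exact Finset.sum_congr rfl fun k _ => by split_ifs <;> ring

omit [Fintype V] [DecidableEq V] in
theorem prod_levels_pos (i : Cell r) (S : Finset V) : 0 < ∏ v ∈ S, (r v : ℝ) :=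
  Finset.prod_pos fun v _ => Nat.cast_pos.mpr (i v).pos

theorem marginal_pos_of_subset {p : Cell r → ℝ} {C D : Finset V} (hDC : D ⊆ C)
    (hp : ∀ i, 0 < marginal p C i) (i : Cell r) : 0 < marginal p D i := by
  have h := marginal_pos hp D i
  rw [marginal_marginal, Finset.inter_eq_left.mpr hDC] at h
  exact pos_of_mul_pos_right h (prod_levels_pos i _).le

theorem condProb_congr (p : Cell r → ℝ) {A B : Finset V} {i j : Cell r}
    (h : ∀ v ∈ A ∪ B, i v = j v) : condProb p A B i = condProb p A B j := by
  rw [condProb, condProb, marginal_congr p h,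
    marginal_congr p fun v hv => h v (Finset.mem_union_right A hv)]

theorem condProb_eq_of_congr {p : Cell r → ℝ} {A C D : Finset V}
    (hp : ∀ i, 0 < marginal p C i) (hAC : A ∩ C ⊆ D) (hDC : D ⊆ C)
    (hdep : ∀ i j : Cell r, (∀ v ∈ A ∪ D, i v = j v) → condProb p A C i = condProb p A C j)
    (i : Cell r) : condProb p A C i = condProb p A D i := by
  have hunion : A ∪ D ∪ (A ∪ C) = A ∪ D ∪ C := by grind
  have hinter : (A ∪ D) ∩ (A ∪ C) = A ∪ D := by grind
  have hinter' : (A ∪ D) ∩ C = D := by grind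
  have hfactor : marginal p (A ∪ C) = fun j => condProb p A C j * marginal p C j :=
    funext fun j => (div_mul_cancel₀ _ (hp j).ne').symm
  have hmarg : marginal p (A ∪ D) i = condProb p A C i * marginal p D i := by
    refine mul_left_cancel₀ (prod_levels_pos i (A ∪ D ∪ C)ᶜ).ne' ?_
    calc (∏ v ∈ (A ∪ D ∪ C)ᶜ, (r v : ℝ)) * marginal p (A ∪ D) i
        = marginal (marginal p (A ∪ C)) (A ∪ D) i := by
          rw [marginal_marginal, hunion, hinter]
      _ = condProb p A C i * marginal (marginal p C) (A ∪ D) i := by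
          rw [hfactor, marginal_mul_of_congr _ fun j => hdep j i]
      _ = (∏ v ∈ (A ∪ D ∪ C)ᶜ, (r v : ℝ)) * (condProb p A C i * marginal p D i) := by
          rw [marginal_marginal, hinter', mul_left_comm]
  rw [condProb.eq_1 p A D, hmarg, mul_div_cancel_right₀ _ (marginal_pos_of_subset hDC hp i).ne']

theorem condIndep_sdiff_iff {p : Cell r → ℝ} {A C D : Finset V}
    (hp : ∀ i, 0 < marginal p C i) (hDC : D ⊆ C) :
    CondIndep p A (C \ D) D ↔ ∀ i, condProb p A C i = condProb p A D i := by
  refine forall_congr' fun i => ?_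
  rw [condProb, condProb, div_eq_div_iff (hp i).ne' (marginal_pos_of_subset hDC hp i).ne',
    Finset.union_assoc, Finset.sdiff_union_of_subset hDC]

theorem mutual_indep_reduce_conditioning_general {ι : Type*} [Fintype ι] {p : Cell r → ℝ}
    {A : ι → Finset V} {C : Finset V} {Cs : ι → Finset V}
    (hp : ∀ i, 0 < marginal p C i)
    (hAC : ∀ j, A j ∩ C ⊆ Cs j)
    (hCs : ∀ j, Cs j ⊆ C)
    (hmut : ∀ i, condProb p (Finset.univ.biUnion A) C i = ∏ j, condProb p (A j) C i)
    (hred : ∀ j i, condProb p (A j) C i = condProb p (A j) (Cs j) i) :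
    (∀ i, condProb p (Finset.univ.biUnion A) C i = ∏ j, condProb p (A j) (Cs j) i) ∧
    (∀ i, condProb p (Finset.univ.biUnion A) C i =
      condProb p (Finset.univ.biUnion A) (Finset.univ.biUnion Cs) i) ∧
    CondIndep p (Finset.univ.biUnion A)
      (C \ Finset.univ.biUnion Cs) (Finset.univ.biUnion Cs) := by
  have hprod : ∀ i, condProb p (Finset.univ.biUnion A) C i = ∏ j, condProb p (A j) (Cs j) i :=
    fun i => by simp only [hmut, hred]
  have hsub : Finset.univ.biUnion Cs ⊆ C := Finset.biUnion_subset.mpr fun j _ => hCs j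
  have hinter : Finset.univ.biUnion A ∩ C ⊆ Finset.univ.biUnion Cs := by
    rw [Finset.biUnion_inter]
    exact Finset.biUnion_mono fun j _ => hAC j
  have hunion : ∀ j, A j ∪ Cs j ⊆ Finset.univ.biUnion A ∪ Finset.univ.biUnion Cs := fun j =>
    Finset.union_subset_union (Finset.subset_biUnion_of_mem A (Finset.mem_univ j))
      (Finset.subset_biUnion_of_mem Cs (Finset.mem_univ j))
  have hcond := condProb_eq_of_congr hp hinter hsub fun i k hik => by
    rw [hprod, hprod]
    exact Finset.prod_congr rfl fun j _ => condProb_congr p fun v hv => hik v (hunion j hv)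
  exact ⟨hprod, hcond, (condIndep_sdiff_iff hp hsub).mpr hcond⟩

/-- if `A_1, …, A_r` are mutually conditionally independent
given `C` and `p_{A_j|C} = p_{A_j|C_j}` with `C_j ⊆ C` for each `j`, then with
`A = ∪_j A_j` and `C* = ∪_j C_j` one has
`p_{A|C} = ∏_j p_{A_j|C_j} = p_{A|C*}`; in particular `A ⊥ (C∖C*) | C*`. -/
theorem mutual_indep_reduce_conditioning
    {V : Type*} [Fintype V] [DecidableEq V] {r : V → ℕ} (hr : ∀ v, 2 ≤ r v)
    (p : Cell r → ℝ) (hp : IsPosPMF p)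
    {m : ℕ} (A : Fin m → Finset V) (C : Finset V) (Cs : Fin m → Finset V)
    (hAA : ∀ j k, j ≠ k → Disjoint (A j) (A k))
    (hAC : ∀ j, Disjoint (A j) C)
    (hCs : ∀ j, Cs j ⊆ C)
    (hmut : ∀ i : Cell r,
      condProb p (Finset.univ.biUnion A) C i = ∏ j, condProb p (A j) C i)
    (hred : ∀ j, ∀ i : Cell r,
      condProb p (A j) C i = condProb p (A j) (Cs j) i) :
    (∀ i : Cell r,
      condProb p (Finset.univ.biUnion A) C i =
        ∏ j, condProb p (A j) (Cs j) i) ∧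
    (∀ i : Cell r,
      condProb p (Finset.univ.biUnion A) C i =
        condProb p (Finset.univ.biUnion A) (Finset.univ.biUnion Cs) i) ∧
    CondIndep p (Finset.univ.biUnion A)
      (C \ Finset.univ.biUnion Cs) (Finset.univ.biUnion Cs) :=
  mutual_indep_reduce_conditioning_general (fun i => marginal_pos hp.1 C i)
    (fun j => by simp [Finset.disjoint_iff_inter_eq_empty.mp (hAC j)]) hCs hmut hred
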